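/- (Lemma 2(b)) Under the augmented push-sum dynamics with the ergodicity hypothesis, for every player i ∈ {1,…,n}, lim_{k→∞} ‖z_i(k+1) − x̄(k)‖ = 0. -/

import Mathlib

open Filter Topology

/-- Backward product `Φ(k,t) = A(k) A(k−1) ⋯ A(k−t)`. -/
noncomputable def backProd {N : ℕ} (A : ℕ → Matrix (Fin N) (Fin N) ℝ) (k t : ℕ) :
    Matrix (Fin N) (Fin N) ℝ :=
  ((List.range (t + 1)).map fun s => A (k - s)).prod


lemma ps_backProd_zero {N : ℕ} (A : ℕ → Matrix (Fin N) (Fin N) ℝ) (k : ℕ) :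
    backProd A k 0 = A k := by
  simp [backProd]

lemma ps_backProd_succ {N : ℕ} (A : ℕ → Matrix (Fin N) (Fin N) ℝ) (k t : ℕ) :
    backProd A k (t + 1) = backProd A k t * A (k - (t + 1)) := by
  unfold backProd
  rw [List.range_succ, List.map_append, List.prod_append]
  simp

lemma ps_sum_dite {E : Type*} [AddCommMonoid E] (n N : ℕ) (hnN : n ≤ N) (f : Fin n → E) :
    ∑ j : Fin N, (if h : (j : ℕ) < n then f ⟨j, h⟩ else 0) = ∑ i, f i := by
  obtain ⟨m, rfl⟩ := Nat.exists_eq_add_of_le hnN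
  rw [Fin.sum_univ_add]
  simp

lemma ps_expand {E : Type*} [NormedAddCommGroup E] [NormedSpace ℝ E] {N : ℕ}
    (A : ℕ → Matrix (Fin N) (Fin N) ℝ) (hAcol : ∀ k j, ∑ i, A k i j = 1)
    (v d : ℕ → Fin N → E)
    (hv : ∀ k j, v (k + 1) j = ∑ m, A k j m • v k m + d k j)
    (c : ℝ) (k : ℕ) (i : Fin N) (t : ℕ) (ht : t ≤ k) :
    ∑ m, A k i m • v k m - c • ∑ j, v k j
      = ∑ j, (backProd A k t i j - c) • v (k - t) j
        + ∑ s ∈ Finset.range t, ∑ j, (backProd A k s i j - c) • d (k - 1 - s) j := by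
  induction t with
  | zero =>
    simp [ps_backProd_zero, sub_smul, Finset.sum_sub_distrib, Finset.smul_sum]
  | succ t ih =>
    rw [ih (by omega), Finset.sum_range_succ]
    have e1 : k - t = (k - (t + 1)) + 1 := by omega
    have e2 : k - 1 - t = k - (t + 1) := by omega
    rw [e1, e2]
    have key : ∑ j, (backProd A k t i j - c) • v (k - (t + 1) + 1) j
        = ∑ j, (backProd A k (t + 1) i j - c) • v (k - (t + 1)) j
          + ∑ j, (backProd A k t i j - c) • d (k - (t + 1)) j := by
      simp only [hv, smul_add, Finset.sum_add_distrib]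
      congr 1
      simp only [Finset.smul_sum, smul_smul]
      rw [Finset.sum_comm]
      refine Finset.sum_congr rfl fun m _ => ?_
      rw [← Finset.sum_smul]
      congr 1
      simp only [sub_mul, Finset.sum_sub_distrib, ← Finset.mul_sum, hAcol, mul_one]
      rw [ps_backProd_succ, Matrix.mul_apply]
    rw [key]
    abel

lemma ps_bound {E : Type*} [NormedAddCommGroup E] [NormedSpace ℝ E] {N : ℕ}
    (A : ℕ → Matrix (Fin N) (Fin N) ℝ) (hAcol : ∀ k j, ∑ i, A k i j = 1)
    (v d : ℕ → Fin N → E)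
    (hv : ∀ k j, v (k + 1) j = ∑ m, A k j m • v k m + d k j)
    (B' lam : ℝ) (φvec : ℕ → Fin N → ℝ)
    (herg : ∀ k t, t ≤ k → ∀ i j : Fin N, |backProd A k t i j - φvec k i| ≤ B' * lam ^ t)
    (k : ℕ) (i : Fin N) :
    ‖∑ m, A k i m • v k m - φvec k i • ∑ j, v k j‖
      ≤ B' * lam ^ k * ∑ j, ‖v 0 j‖
        + ∑ s ∈ Finset.range k, B' * lam ^ s * ∑ j, ‖d (k - 1 - s) j‖ := by
  rw [ps_expand A hAcol v d hv (φvec k i) k i k le_rfl]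
  have one : ∀ t, t ≤ k → ∀ u : Fin N → E,
      ‖∑ j, (backProd A k t i j - φvec k i) • u j‖ ≤ B' * lam ^ t * ∑ j, ‖u j‖ := by
    intro t ht u
    rw [Finset.mul_sum]
    refine norm_sum_le_of_le _ fun j _ => ?_
    rw [norm_smul]
    exact mul_le_mul_of_nonneg_right (herg k t ht i j) (norm_nonneg _)
  refine (norm_add_le _ _).trans (add_le_add ?_ ?_)
  · have := one k le_rfl (v (k - k))
    simpa using this
  · refine norm_sum_le_of_le _ fun s hs => ?_
    exact one s (Finset.mem_range.1 hs).le _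

lemma ps_conv_bdd (lam C : ℝ) (h0 : 0 < lam) (h1 : lam < 1) (D : ℕ → ℝ)
    (hDC : ∀ k, D k ≤ C) (hC : 0 ≤ C) (k : ℕ) :
    ∑ s ∈ Finset.range k, lam ^ s * D (k - 1 - s) ≤ C * (1 - lam)⁻¹ := by
  calc ∑ s ∈ Finset.range k, lam ^ s * D (k - 1 - s)
      ≤ ∑ s ∈ Finset.range k, lam ^ s * C :=
        Finset.sum_le_sum fun s _ => mul_le_mul_of_nonneg_left (hDC _) (by positivity)
    _ = C * ∑ s ∈ Finset.range k, lam ^ s := by rw [← Finset.sum_mul, mul_comm]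
    _ ≤ C * (1 - lam)⁻¹ := by
        refine mul_le_mul_of_nonneg_left ?_ hC
        rw [← tsum_geometric_of_lt_one h0.le h1]
        exact (summable_geometric_of_lt_one h0.le h1).sum_le_tsum _ fun s _ => by positivity

lemma ps_conv_tendsto (lam C : ℝ) (h0 : 0 < lam) (h1 : lam < 1) (D : ℕ → ℝ)
    (hD0 : ∀ k, 0 ≤ D k) (hDC : ∀ k, D k ≤ C) (hD : Tendsto D atTop (𝓝 0)) :
    Tendsto (fun k => ∑ s ∈ Finset.range k, lam ^ s * D (k - 1 - s)) atTop (𝓝 0) := by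
  have hC : 0 ≤ C := (hD0 0).trans (hDC 0)
  have key := tendsto_tsum_of_dominated_convergence (𝓕 := atTop) (bound := fun s : ℕ => lam ^ s * C)
    (f := fun (k s : ℕ) => if s < k then lam ^ s * D (k - 1 - s) else 0)
    (g := fun _ => (0 : ℝ))
    ((summable_geometric_of_lt_one h0.le h1).mul_right C)
    (by
      intro s
      have h2 : Tendsto (fun k => lam ^ s * D (k - 1 - s)) atTop (𝓝 0) := by
        have : Tendsto (fun k : ℕ => k - 1 - s) atTop atTop :=
          (tendsto_sub_atTop_nat s).comp (tendsto_sub_atTop_nat 1)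
        simpa using (hD.comp this).const_mul (lam ^ s)
      refine h2.congr' ?_
      filter_upwards [eventually_gt_atTop s] with k hk
      simp [hk])
    (by
      refine Eventually.of_forall fun k s => ?_
      split_ifs
      · rw [Real.norm_of_nonneg (mul_nonneg (by positivity) (hD0 _))]
        exact mul_le_mul_of_nonneg_left (hDC _) (by positivity)
      · simp only [norm_zero]; positivity)
  rw [tsum_zero] at key
  refine key.congr fun k => ?_
  rw [tsum_eq_sum (s := Finset.range k)]
  · refine Finset.sum_congr rfl fun s hs => ?_
    rw [if_pos (Finset.mem_range.1 hs)]
  · intro s hs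
    rw [if_neg (by simpa using hs)]

/-- Lemma 2(b): under the augmented push-sum dynamics with the ergodicity hypothesis,
each player's local estimate `z_i(k+1)` asymptotically tracks the aggregate action
`x̄(k)`. -/
theorem pushsum_consensus_tendsto_zero
    (n N p : ℕ) (hn : 0 < n) (hnN : n ≤ N)
    (X : Fin n → Set (EuclideanSpace ℝ (Fin p)))
    -- nonempty convex compact action sets
    (hXne : ∀ i, (X i).Nonempty)
    (hXconv : ∀ i, Convex ℝ (X i))
    (hXcomp : ∀ i, IsCompact (X i))
    -- the game mappings, L-Lipschitz on ℝ^p × ℝ^p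
    (F : Fin n → EuclideanSpace ℝ (Fin p) → EuclideanSpace ℝ (Fin p) →
      EuclideanSpace ℝ (Fin p))
    (L : ℝ) (hLpos : 0 < L)
    (hFlip : ∀ i xi xi' z z',
      ‖F i xi z - F i xi' z'‖ ≤ L * Real.sqrt (‖xi - xi'‖ ^ 2 + ‖z - z'‖ ^ 2))
    -- nonnegative column-stochastic matrices
    (A : ℕ → Matrix (Fin N) (Fin N) ℝ)
    (hAnn : ∀ k i j, 0 ≤ A k i j)
    (hAcol : ∀ k j, ∑ i, A k i j = 1)
    -- states
    (v w : ℕ → Fin N → EuclideanSpace ℝ (Fin p))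
    (y : ℕ → Fin N → ℝ)
    (x z : ℕ → Fin n → EuclideanSpace ℝ (Fin p))
    -- initialization
    (hx0 : ∀ i, x 0 i ∈ X i)
    (hv0p : ∀ i : Fin n, v 0 (Fin.castLE hnN i) = x 0 i)
    (hy0p : ∀ i : Fin n, y 0 (Fin.castLE hnN i) = 1)
    (hv0v : ∀ j : Fin N, n ≤ (j : ℕ) → v 0 j = 0)
    (hy0v : ∀ j : Fin N, n ≤ (j : ℕ) → y 0 j = 0)
    -- activation sets
    (Aset : ℕ → Finset (Fin n))
    (hAsetne : ∀ k, (Aset k).Nonempty)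
    (σ1 : ℕ) (hσ1 : 1 ≤ σ1)
    (hcover : ∀ k, ∀ i : Fin n, ∃ u, k + 1 ≤ u ∧ u ≤ k + σ1 ∧ i ∈ Aset u)
    -- counters
    (l : Fin n → ℕ → ℕ) (σ2 : ℕ) (hσ2 : 1 ≤ σ2)
    (hl0 : ∀ i, l i 0 = 0)
    (hlact : ∀ i k, i ∈ Aset k → l i k + 1 ≤ l i (k + 1) ∧ l i (k + 1) ≤ l i k + σ2)
    (hlstay : ∀ i k, i ∉ Aset k → l i (k + 1) = l i k)
    -- stepsize generating sequence
    (ρ : ℕ → ℝ)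
    (hρpos : ∀ t, 0 < ρ t)
    (hρmono : ∀ t, ρ (t + 1) ≤ ρ t)
    (hρsq : Summable fun t => ρ t ^ 2)
    (α : Fin n → ℕ → ℝ)
    (hα : ∀ i k, α i k = ∑ t ∈ Finset.Ico (l i k) (l i (k + 1)), ρ t)
    -- push-sum dynamics
    (hw : ∀ k, ∀ j : Fin N, w (k + 1) j = ∑ m, A k j m • v k m)
    (hy : ∀ k, ∀ j : Fin N, y (k + 1) j = ∑ m, A k j m * y k m)
    (hz : ∀ k, ∀ i : Fin n,
      z (k + 1) i = (y (k + 1) (Fin.castLE hnN i))⁻¹ • w (k + 1) (Fin.castLE hnN i))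
    -- the projected pseudo-gradient update for active players
    (hxup : ∀ k, ∀ i : Fin n, i ∈ Aset k →
      x (k + 1) i ∈ X i ∧
      ∀ u ∈ X i,
        ‖x k i - α i k • F i (x k i) (z (k + 1) i) - x (k + 1) i‖ ≤
        ‖x k i - α i k • F i (x k i) (z (k + 1) i) - u‖)
    (hxstay : ∀ k, ∀ i : Fin n, i ∉ Aset k → x (k + 1) i = x k i)
    (hv : ∀ k, ∀ j : Fin N, v (k + 1) j =
      w (k + 1) j + (if h : (j : ℕ) < n then x (k + 1) ⟨j, h⟩ - x k ⟨j, h⟩ else 0))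
    -- ergodicity hypothesis
    (B' lam η : ℝ) (hB' : 0 < B') (hlam : lam ∈ Set.Ioo (0 : ℝ) 1)
    (hη : η ∈ Set.Ioc (0 : ℝ) 1)
    (φvec : ℕ → Fin N → ℝ)
    (hφnn : ∀ k i, 0 ≤ φvec k i)
    (hφsum : ∀ k, ∑ i, φvec k i = 1)
    (herg : ∀ k t, t ≤ k → ∀ i j : Fin N, |backProd A k t i j - φvec k i| ≤ B' * lam ^ t)
    (hylb : ∀ i : Fin n, ∀ k, 1 ≤ k → η ≤ y k (Fin.castLE hnN i)) :
    ∀ i : Fin n,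
      Tendsto (fun k => ‖z (k + 1) i - (n : ℝ)⁻¹ • ∑ j, x k j‖) atTop (nhds 0) := by
  have hlam0 := hlam.1
  have hlam1 := hlam.2
  have hη0 := hη.1
  -- actions stay in the action sets
  have hxX : ∀ k i, x k i ∈ X i := by
    intro k
    induction k with
    | zero => exact hx0
    | succ k ih =>
      intro i
      by_cases hi : i ∈ Aset k
      · exact (hxup k i hi).1
      · rw [hxstay k i hi]; exact ih i
  obtain ⟨R, hR0, hR⟩ : ∃ R : ℝ, 0 ≤ R ∧ ∀ k i, ‖x k i‖ ≤ R := by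
    have h1 : ∀ i, ∃ r : ℝ, ∀ a ∈ X i, ‖a‖ ≤ r := fun i => (hXcomp i).isBounded.exists_norm_le
    choose r hr using h1
    refine ⟨∑ i, |r i|, Finset.sum_nonneg fun i _ => abs_nonneg _, fun k i => ?_⟩
    exact ((hr i _ (hxX k i)).trans (le_abs_self _)).trans
      (Finset.single_le_sum (f := fun i => |r i|) (fun i _ => abs_nonneg _) (Finset.mem_univ i))
  -- perturbations
  set d : ℕ → Fin N → EuclideanSpace ℝ (Fin p) := fun k j =>
    if h : (j : ℕ) < n then x (k + 1) ⟨j, h⟩ - x k ⟨j, h⟩ else 0 with hd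
  have hvd : ∀ k j, v (k + 1) j = ∑ m, A k j m • v k m + d k j := by
    intro k j; rw [hv, hw]
  set D : ℕ → ℝ := fun k => ∑ j, ‖d k j‖ with hDdef
  have hDeq : ∀ k, D k = ∑ i, ‖x (k + 1) i - x k i‖ := by
    intro k
    rw [← ps_sum_dite n N hnN (fun i => ‖x (k + 1) i - x k i‖)]
    refine Finset.sum_congr rfl fun j _ => ?_
    simp only [hd]
    split_ifs <;> simp
  have hD0 : ∀ k, 0 ≤ D k := fun k => Finset.sum_nonneg fun j _ => norm_nonneg _
  have hDC : ∀ k, D k ≤ n * (2 * R) := by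
    intro k
    rw [hDeq]
    calc ∑ i, ‖x (k + 1) i - x k i‖ ≤ ∑ _i : Fin n, 2 * R :=
          Finset.sum_le_sum fun i _ => by
            have := norm_sub_le (x (k + 1) i) (x k i)
            linarith [hR (k + 1) i, hR k i]
      _ = n * (2 * R) := by simp
  have hn' : (0 : ℝ) < n := by exact_mod_cast hn
  -- conservation
  have hSv : ∀ k, ∑ j, v k j = ∑ i, x k i := by
    intro k
    induction k with
    | zero =>
      rw [← ps_sum_dite n N hnN (fun i => x 0 i)]
      refine Finset.sum_congr rfl fun j _ => ?_
      split_ifs with h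
      · exact hv0p ⟨j, h⟩
      · exact hv0v j (not_lt.1 h)
    | succ k ih =>
      simp only [hvd, Finset.sum_add_distrib]
      rw [Finset.sum_comm]
      simp only [← Finset.sum_smul, hAcol, one_smul]
      rw [ih, hd, ps_sum_dite n N hnN (fun i => x (k + 1) i - x k i), Finset.sum_sub_distrib]
      abel
  have hSy : ∀ k, ∑ j, y k j = n := by
    intro k
    induction k with
    | zero =>
      have : ∑ i : Fin n, (1 : ℝ) = n := by simp
      rw [← this, ← ps_sum_dite n N hnN (fun _ => (1 : ℝ))]
      refine Finset.sum_congr rfl fun j _ => ?_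
      split_ifs with h
      · exact hy0p ⟨j, h⟩
      · exact hy0v j (not_lt.1 h)
    | succ k ih =>
      simp only [hy]
      rw [Finset.sum_comm]
      simp only [← Finset.sum_mul, hAcol, one_mul]
      exact ih
  set V0 : ℝ := ∑ j, ‖v 0 j‖ with hV0
  set Y0 : ℝ := ∑ j, ‖y 0 j‖ with hY0
  have hV0n : 0 ≤ V0 := Finset.sum_nonneg fun j _ => norm_nonneg _
  have hY0n : 0 ≤ Y0 := Finset.sum_nonneg fun j _ => norm_nonneg _
  set cv : ℕ → ℝ := fun k => ∑ s ∈ Finset.range k, lam ^ s * D (k - 1 - s) with hcv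
  have hwb : ∀ k j, ‖w (k + 1) j - φvec k j • ∑ i, x k i‖ ≤ B' * lam ^ k * V0 + B' * cv k := by
    intro k j
    have := ps_bound A hAcol v d hvd B' lam φvec herg k j
    rw [hSv, ← hw] at this
    refine this.trans (le_of_eq ?_)
    simp only [hcv, Finset.mul_sum, mul_assoc, hDdef, hV0]
  have hyb : ∀ k j, |y (k + 1) j - φvec k j * n| ≤ B' * lam ^ k * Y0 := by
    intro k j
    have := ps_bound (E := ℝ) A hAcol y (fun _ _ => 0)
      (by intro k j; simp [hy]) B' lam φvec herg k j
    simp only [smul_eq_mul] at this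
    rw [hSy, ← hy] at this
    simpa [hY0] using this
  set xb : ℕ → EuclideanSpace ℝ (Fin p) := fun k => (n : ℝ)⁻¹ • ∑ j, x k j with hxb
  have hxbR : ∀ k, ‖xb k‖ ≤ R := by
    intro k
    have h1 : ‖∑ j, x k j‖ ≤ n * R := by
      refine (norm_sum_le_of_le (f := fun j => x k j) _ fun j _ => hR k j).trans ?_
      simp
    simp only [hxb]
    rw [norm_smul, norm_inv, Real.norm_of_nonneg hn'.le, inv_mul_le_iff₀ hn']
    exact h1
  -- main estimate
  have hmain : ∀ k i, ‖z (k + 1) i - xb k‖ ≤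
      η⁻¹ * (B' * lam ^ k * V0 + B' * cv k + B' * lam ^ k * Y0 * R) := by
    intro k i
    set j := Fin.castLE hnN i with hj
    have hyp : η ≤ y (k + 1) j := hylb i (k + 1) (by omega)
    have hypos : 0 < y (k + 1) j := hη0.trans_le hyp
    have hSx : ∑ i, x k i = (n : ℝ) • xb k := by
      simp only [hxb]; rw [smul_inv_smul₀ hn'.ne']
    have heq : z (k + 1) i - xb k = (y (k + 1) j)⁻¹ •
        ((w (k + 1) j - φvec k j • ∑ i, x k i) - (y (k + 1) j - φvec k j * n) • xb k) := by
      have : (w (k + 1) j - φvec k j • ∑ i, x k i) - (y (k + 1) j - φvec k j * n) • xb k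
          = w (k + 1) j - y (k + 1) j • xb k := by
        rw [hSx, smul_smul, sub_smul]; abel
      rw [this, hz, smul_sub, inv_smul_smul₀ hypos.ne']
    rw [heq, norm_smul, norm_inv, Real.norm_of_nonneg hypos.le]
    have h2 : ‖(w (k + 1) j - φvec k j • ∑ i, x k i) - (y (k + 1) j - φvec k j * n) • xb k‖
        ≤ B' * lam ^ k * V0 + B' * cv k + B' * lam ^ k * Y0 * R := by
      refine (norm_sub_le _ _).trans (add_le_add (hwb k j) ?_)
      rw [norm_smul]
      exact mul_le_mul (hyb k j) (hxbR k) (norm_nonneg _) (by positivity)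
    exact mul_le_mul (inv_anti₀ hη0 hyp) h2 (norm_nonneg _) (by positivity)
  -- boundedness of the estimates
  obtain ⟨Z, hZ⟩ : ∃ Z : ℝ, ∀ k i, ‖z (k + 1) i‖ ≤ Z := by
    refine ⟨η⁻¹ * (B' * V0 + B' * (n * (2 * R) * (1 - lam)⁻¹) + B' * Y0 * R) + R, fun k i => ?_⟩
    have hl1 : lam ^ k ≤ 1 := pow_le_one₀ hlam0.le hlam1.le
    have hcvb : cv k ≤ n * (2 * R) * (1 - lam)⁻¹ :=
      ps_conv_bdd lam _ hlam0 hlam1 D hDC (by positivity) k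
    have hBl : B' * lam ^ k ≤ B' := mul_le_of_le_one_right hB'.le hl1
    have h3 : ‖z (k + 1) i‖ ≤ ‖z (k + 1) i - xb k‖ + ‖xb k‖ := by
      simpa using norm_add_le (z (k + 1) i - xb k) (xb k)
    refine h3.trans (add_le_add ((hmain k i).trans ?_) (hxbR k))
    gcongr
  obtain ⟨CF, hCF0, hCF⟩ : ∃ CF : ℝ, 0 ≤ CF ∧ ∀ k i, ‖F i (x k i) (z (k + 1) i)‖ ≤ CF := by
    refine ⟨∑ i, ‖F i 0 0‖ + L * Real.sqrt (R ^ 2 + Z ^ 2), by positivity, fun k i => ?_⟩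
    have h1 := hFlip i (x k i) 0 (z (k + 1) i) 0
    simp only [sub_zero] at h1
    have h2 : Real.sqrt (‖x k i‖ ^ 2 + ‖z (k + 1) i‖ ^ 2) ≤ Real.sqrt (R ^ 2 + Z ^ 2) := by
      have := hR k i
      have := hZ k i
      gcongr
    have h3 : ‖F i 0 0‖ ≤ ∑ i, ‖F i 0 0‖ :=
      Finset.single_le_sum (f := fun i => ‖F i 0 0‖) (fun i _ => norm_nonneg _) (Finset.mem_univ i)
    have h4 : ‖F i (x k i) (z (k + 1) i)‖ ≤ ‖F i (x k i) (z (k + 1) i) - F i 0 0‖ + ‖F i 0 0‖ := by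
      simpa using norm_add_le (F i (x k i) (z (k + 1) i) - F i 0 0) (F i 0 0)
    have h5 := mul_le_mul_of_nonneg_left h2 hLpos.le
    linarith
  -- stepsizes vanish
  have hρanti : Antitone ρ := antitone_nat_of_succ_le hρmono
  have hρ0 : Tendsto ρ atTop (𝓝 0) := by
    have h1 := hρsq.tendsto_atTop_zero
    have h2 := h1.sqrt
    simp only [Real.sqrt_zero] at h2
    refine h2.congr fun t => ?_
    rw [Real.sqrt_sq (hρpos t).le]
  have hlmono : ∀ i, Monotone (l i) := by
    intro i
    refine monotone_nat_of_le_succ fun k => ?_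
    by_cases hi : i ∈ Aset k
    · have := (hlact i k hi).1; omega
    · exact (hlstay i k hi).ge
  have hltop : ∀ i, Tendsto (l i) atTop atTop := by
    intro i
    refine tendsto_atTop_atTop_of_monotone (hlmono i) fun b => ?_
    induction b with
    | zero => exact ⟨0, Nat.zero_le _⟩
    | succ b ih =>
      obtain ⟨a, ha⟩ := ih
      obtain ⟨u, hu1, _, hu2⟩ := hcover a i
      have h1 := (hlact i u hu2).1
      have h2 : l i a ≤ l i u := hlmono i (by omega)
      exact ⟨u + 1, by omega⟩
  have hstep : ∀ k i, ‖x (k + 1) i - x k i‖ ≤ 2 * CF * (σ2 * ρ (l i k)) := by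
    intro k i
    have hρk := hρpos (l i k)
    by_cases hi : i ∈ Aset k
    · have hα0 : 0 ≤ α i k := by
        rw [hα]; exact Finset.sum_nonneg fun t _ => (hρpos t).le
      have hα1 : α i k ≤ σ2 * ρ (l i k) := by
        rw [hα]
        have h1 : ∑ t ∈ Finset.Ico (l i k) (l i (k + 1)), ρ t ≤
            ∑ _t ∈ Finset.Ico (l i k) (l i (k + 1)), ρ (l i k) :=
          Finset.sum_le_sum fun t ht => hρanti (Finset.mem_Ico.1 ht).1
        refine h1.trans ?_
        rw [Finset.sum_const, nsmul_eq_mul, Nat.card_Ico]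
        refine mul_le_mul_of_nonneg_right ?_ hρk.le
        have := (hlact i k hi).2
        exact_mod_cast (by omega : l i (k + 1) - l i k ≤ σ2)
      set f := F i (x k i) (z (k + 1) i) with hf
      have h1 := (hxup k i hi).2 (x k i) (hxX k i)
      rw [← hf] at h1
      have h2 : ‖x k i - α i k • f - x k i‖ = ‖α i k • f‖ := by
        rw [sub_sub_cancel_left, norm_neg]
      rw [h2] at h1
      have h3 : ‖x (k + 1) i - x k i‖ ≤ ‖x k i - α i k • f - x (k + 1) i‖ + ‖α i k • f‖ := by
        have := norm_add_le (x k i - α i k • f - x (k + 1) i) (α i k • f)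
        rw [norm_sub_rev]
        refine le_trans (le_of_eq ?_) this
        congr 1
        abel
      have h4 : ‖α i k • f‖ ≤ (σ2 * ρ (l i k)) * CF := by
        rw [norm_smul, Real.norm_of_nonneg hα0]
        exact mul_le_mul hα1 (hCF k i) (norm_nonneg _) (by positivity)
      linarith
    · rw [hxstay k i hi, sub_self, norm_zero]
      positivity
  have hDlim : Tendsto D atTop (𝓝 0) := by
    have h1 : Tendsto (fun k => ∑ i : Fin n, 2 * CF * (σ2 * ρ (l i k))) atTop (𝓝 0) := by
      have : Tendsto (fun k => ∑ i : Fin n, 2 * CF * (σ2 * ρ (l i k))) atTop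
          (𝓝 (∑ _i : Fin n, 2 * CF * (σ2 * 0))) :=
        tendsto_finsetSum _ fun i _ =>
          ((hρ0.comp (hltop i)).const_mul (σ2 : ℝ)).const_mul (2 * CF)
      simpa using this
    refine squeeze_zero hD0 (fun k => ?_) h1
    rw [hDeq]
    exact Finset.sum_le_sum fun i _ => hstep k i
  have hcvlim : Tendsto cv atTop (𝓝 0) :=
    ps_conv_tendsto lam _ hlam0 hlam1 D hD0 hDC hDlim
  intro i
  have hpow : Tendsto (fun k : ℕ => lam ^ k) atTop (𝓝 0) :=
    tendsto_pow_atTop_nhds_zero_of_lt_one hlam0.le hlam1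
  have hfin : Tendsto (fun k => η⁻¹ * (B' * lam ^ k * V0 + B' * cv k + B' * lam ^ k * Y0 * R))
      atTop (𝓝 0) := by
    have := (((hpow.const_mul B').mul_const V0).add (hcvlim.const_mul B')).add
      (((hpow.const_mul B').mul_const Y0).mul_const R)
    simpa using this.const_mul η⁻¹
  exact squeeze_zero (fun k => norm_nonneg _) (fun k => hmain k i) hfin
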